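/- arXiv:0810.1865 — 4 statements merged into one kernel-verified Lean document; each statement's English description precedes it below -/
import Mathlib

section
/- Let V be a finite-dimensional real vector space. For every subspace E ⊆ V and every alternating bilinear form ε on E, the subspace L(E,ε) is a linear Dirac structure on V; moreover L(E,0) = E ⊕ Ann(E). -/
open Module

variable {V : Type*} [AddCommGroup V] [Module ℝ V]

/-- The canonical symmetric pairing on `V ⊕ V*`: `⟨u+α, v+β⟩ = (α v + β u)/2`. -/
noncomputable def diracPairing (p q : V × Module.Dual ℝ V) : ℝ :=
  (p.2 q.1 + q.2 p.1) / 2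

/-- A subspace of `V ⊕ V*` is isotropic if the canonical pairing vanishes on it. -/
def IsIsotropic (L : Submodule ℝ (V × Module.Dual ℝ V)) : Prop :=
  ∀ p ∈ L, ∀ q ∈ L, diracPairing p q = 0

/-- A linear Dirac structure on `V` is a maximal isotropic subspace of `V ⊕ V*`. -/
def IsDirac (L : Submodule ℝ (V × Module.Dual ℝ V)) : Prop :=
  IsIsotropic L ∧ ∀ L' : Submodule ℝ (V × Module.Dual ℝ V), IsIsotropic L' → L ≤ L' → L' = L

/-- `L(E,ε) = {u + α : u ∈ E, α|_E = ε(u,·)}`. -/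
def LSpace (E : Submodule ℝ V) (ε : ↥E →ₗ[ℝ] ↥E →ₗ[ℝ] ℝ) :
    Submodule ℝ (V × Module.Dual ℝ V) where
  carrier := {p | ∃ u : E, p.1 = ↑u ∧ ∀ v : E, p.2 ↑v = ε u v}
  add_mem' := by
    rintro ⟨x, α⟩ ⟨y, β⟩ ⟨u, hu, hα⟩ ⟨w, hw, hβ⟩
    refine ⟨u + w, by simpa using congrArg₂ (· + ·) hu hw, fun v => ?_⟩
    simp [hα v, hβ v]
  zero_mem' := ⟨0, by simp, fun v => by simp⟩
  smul_mem' := by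
    rintro c ⟨x, α⟩ ⟨u, hu, hα⟩
    exact ⟨c • u, by simpa using congrArg (c • ·) hu, fun v => by simp [hα v]⟩

theorem lSpace_isDirac_and_lSpace_zero
    (V : Type*) [AddCommGroup V] [Module ℝ V] [FiniteDimensional ℝ V]
    (E : Submodule ℝ V) (ε : ↥E →ₗ[ℝ] ↥E →ₗ[ℝ] ℝ) (hε : ∀ x : E, ε x x = 0) :
    IsDirac (LSpace E ε) ∧
    LSpace E (0 : ↥E →ₗ[ℝ] ↥E →ₗ[ℝ] ℝ) = E.prod (Submodule.dualAnnihilator E) := by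
  have anti : ∀ x y : E, ε x y = - ε y x := by
    intro x y
    have h := hε (x + y)
    simp only [map_add, LinearMap.add_apply, hε] at h
    linarith
  refine ⟨⟨?_, ?_⟩, ?_⟩
  · rintro ⟨x, α⟩ ⟨u, hu, hα⟩ ⟨y, β⟩ ⟨w, hw, hβ⟩
    simp only at hu hw hα hβ
    subst hu hw
    simp only [diracPairing, hα, hβ]
    rw [anti u w]
    simp
  · intro L' hL' hle
    refine le_antisymm ?_ hle
    rintro ⟨x, α⟩ hp
    have hx : x ∈ E := by
      rw [← Subspace.forall_mem_dualAnnihilator_apply_eq_zero_iff]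
      intro φ hφ
      have hq : ((0 : V), φ) ∈ LSpace E ε :=
        ⟨0, by simp, fun v => by
          simpa using (Submodule.mem_dualAnnihilator φ).1 hφ v v.2⟩
      have h := hL' _ hp _ (hle hq)
      simpa [diracPairing] using h
    refine ⟨⟨x, hx⟩, rfl, fun v => ?_⟩
    obtain ⟨β, hβ⟩ := LinearMap.exists_extend (ε v)
    have hβ' : ∀ w : E, β w = ε v w := fun w => by rw [← hβ]; rfl
    have hq : ((v : V), β) ∈ LSpace E ε := ⟨v, rfl, hβ'⟩
    have h := hL' _ hp _ (hle hq)
    have h2 := hβ' ⟨x, hx⟩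
    have h3 := anti ⟨x, hx⟩ v
    simp only [diracPairing] at h h2 ⊢
    linarith
  · ext ⟨x, α⟩
    rw [Submodule.mem_prod, Submodule.mem_dualAnnihilator]
    constructor
    · rintro ⟨u, hu, hα⟩
      simp only at hu hα
      subst hu
      exact ⟨u.2, fun w hw => by simpa using hα ⟨w, hw⟩⟩
    · rintro ⟨hx, hα⟩
      exact ⟨⟨x, hx⟩, rfl, fun v => by simpa using hα v v.2⟩
end

section
/- Let V be a finite-dimensional real vector space, let L be an isotropic subspace of V ⊕ V*, and let E = π(L). Then there exists a unique alternating bilinear form ε on E such that L ⊆ L(E,ε). -/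
open Module

variable {V : Type*} [AddCommGroup V] [Module ℝ V]

theorem exists_unique_alt_form_of_isotropic
    (V : Type*) [AddCommGroup V] [Module ℝ V] [FiniteDimensional ℝ V]
    (L : Submodule ℝ (V × Module.Dual ℝ V)) (hL : IsIsotropic L) :
    ∃ ε : ↥(L.map (LinearMap.fst ℝ V (Module.Dual ℝ V))) →ₗ[ℝ]
          ↥(L.map (LinearMap.fst ℝ V (Module.Dual ℝ V))) →ₗ[ℝ] ℝ,
      ((∀ x, ε x x = 0) ∧ L ≤ LSpace (L.map (LinearMap.fst ℝ V (Module.Dual ℝ V))) ε) ∧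
      ∀ ε' : ↥(L.map (LinearMap.fst ℝ V (Module.Dual ℝ V))) →ₗ[ℝ]
             ↥(L.map (LinearMap.fst ℝ V (Module.Dual ℝ V))) →ₗ[ℝ] ℝ,
        (∀ x, ε' x x = 0) → L ≤ LSpace (L.map (LinearMap.fst ℝ V (Module.Dual ℝ V))) ε' →
        ε' = ε := by
  have hex : ∀ x : ↥(L.map (LinearMap.fst ℝ V (Module.Dual ℝ V))), ∃ p, p ∈ L ∧ p.1 = (x : V) := by
    rintro ⟨x, p, hp, rfl⟩
    exact ⟨p, hp, rfl⟩
  choose p hpL hp using hex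
  have hiso : ∀ a ∈ L, ∀ b ∈ L, a.2 b.1 = -(b.2 a.1) := by
    intro a ha b hb
    have h := hL a ha b hb
    unfold diracPairing at h
    linarith
  have key : ∀ q ∈ L, ∀ v : ↥(L.map (LinearMap.fst ℝ V (Module.Dual ℝ V))), q.2 (v : V) = -((p v).2 q.1) := by
    intro q hq v
    have h := hiso q hq (p v) (hpL v)
    rwa [hp] at h
  refine ⟨LinearMap.mk₂ ℝ (fun x v => (p x).2 (v : V)) ?_ ?_ ?_ ?_, ⟨?_, ?_⟩, ?_⟩
  · intro x y v
    simp only [key _ (hpL _) v, hp, Submodule.coe_add, map_add]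
    ring
  · intro c x v
    simp only [key _ (hpL _) v, hp, Submodule.coe_smul, map_smul, smul_eq_mul]
    ring
  · intro x v w
    simp
  · intro c x v
    simp
  · intro x
    have h := key _ (hpL x) x
    rw [hp] at h
    simp only [LinearMap.mk₂_apply]
    linarith
  · intro q hq
    refine ⟨⟨q.1, q, hq, rfl⟩, rfl, fun v => ?_⟩
    simp only [LinearMap.mk₂_apply]
    rw [key q hq v, key _ (hpL _) v, hp]
  · intro ε' _ h'
    ext x v
    obtain ⟨u, hu, h⟩ := h' (hpL x)
    have hux : u = x := Subtype.ext (by rw [← hu, hp])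
    subst hux
    simp only [LinearMap.mk₂_apply]
    exact (h v).symm
end

section
/- Let (V,g) be a finite-dimensional real inner product space, let J₊, J₋ be orthogonal complex structures on V, and set ℋ⁺ = ker(J₊ − J₋), ℋ⁻ = ker(J₊ + J₋) and 𝒱 = (ℋ⁺ ⊕ ℋ⁻)^⊥. Then ℋ⁺, ℋ⁻ and 𝒱 are each invariant under both J₊ and J₋, and both J₊ − J₋ and J₊ + J₋ restrict to linear automorphisms of 𝒱. -/
open scoped RealInnerProductSpace

theorem aux_orth {V : Type*} [NormedAddCommGroup V] [InnerProductSpace ℝ V]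
    (J : V →ₗ[ℝ] V) (h2 : ∀ x, J (J x) = -x) (ho : ∀ X Y : V, ⟪J X, J Y⟫ = ⟪X, Y⟫)
    (W : Submodule ℝ V) (hW : W.map J ≤ W) : Wᗮ.map J ≤ Wᗮ := by
  rintro _ ⟨x, hx, rfl⟩
  rw [Submodule.mem_orthogonal]
  intro w hw
  have h1 : ⟪J w, x⟫ = 0 :=
    (Submodule.mem_orthogonal _ _).1 hx _ (hW (Submodule.mem_map_of_mem hw))
  rw [← ho, h2, inner_neg_right, h1, neg_zero]

theorem aux_aut {V : Type*} [NormedAddCommGroup V] [InnerProductSpace ℝ V]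
    [FiniteDimensional ℝ V] (f : V →ₗ[ℝ] V) (W : Submodule ℝ V)
    (hk : LinearMap.ker f ≤ W) (hW : ∀ x ∈ Wᗮ, f x ∈ Wᗮ) :
    Wᗮ.map f = Wᗮ ∧ ∀ x ∈ Wᗮ, f x = 0 → x = 0 := by
  have hinj : ∀ x ∈ Wᗮ, f x = 0 → x = 0 := by
    intro x hx h0
    have := (Submodule.mem_orthogonal _ _).1 hx x (hk (LinearMap.mem_ker.2 h0))
    exact inner_self_eq_zero.1 this
  refine ⟨le_antisymm ?_ ?_, hinj⟩
  · rintro _ ⟨x, hx, rfl⟩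
    exact hW x hx
  · have hi : Set.InjOn f (Wᗮ : Submodule ℝ V) := by
      intro x hx y hy hxy
      exact sub_eq_zero.1 (hinj _ (Submodule.sub_mem _ hx hy) (by rw [map_sub, hxy, sub_self]))
    exact (LinearMap.injOn_iff_surjOn hW).1 hi

theorem invariance_and_automorphisms
    (V : Type*) [NormedAddCommGroup V] [InnerProductSpace ℝ V] [FiniteDimensional ℝ V]
    (Jp Jm : V →ₗ[ℝ] V)
    (hp2 : Jp ∘ₗ Jp = -LinearMap.id) (hpo : ∀ X Y : V, ⟪Jp X, Jp Y⟫ = ⟪X, Y⟫)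
    (hm2 : Jm ∘ₗ Jm = -LinearMap.id) (hmo : ∀ X Y : V, ⟪Jm X, Jm Y⟫ = ⟪X, Y⟫) :
    ((LinearMap.ker (Jp - Jm)).map Jp ≤ LinearMap.ker (Jp - Jm) ∧
     (LinearMap.ker (Jp - Jm)).map Jm ≤ LinearMap.ker (Jp - Jm)) ∧
    ((LinearMap.ker (Jp + Jm)).map Jp ≤ LinearMap.ker (Jp + Jm) ∧
     (LinearMap.ker (Jp + Jm)).map Jm ≤ LinearMap.ker (Jp + Jm)) ∧
    (((LinearMap.ker (Jp - Jm) ⊔ LinearMap.ker (Jp + Jm))ᗮ).map Jp ≤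
        (LinearMap.ker (Jp - Jm) ⊔ LinearMap.ker (Jp + Jm))ᗮ ∧
     ((LinearMap.ker (Jp - Jm) ⊔ LinearMap.ker (Jp + Jm))ᗮ).map Jm ≤
        (LinearMap.ker (Jp - Jm) ⊔ LinearMap.ker (Jp + Jm))ᗮ) ∧
    (((LinearMap.ker (Jp - Jm) ⊔ LinearMap.ker (Jp + Jm))ᗮ).map (Jp - Jm) =
        (LinearMap.ker (Jp - Jm) ⊔ LinearMap.ker (Jp + Jm))ᗮ ∧
      ∀ x ∈ (LinearMap.ker (Jp - Jm) ⊔ LinearMap.ker (Jp + Jm))ᗮ,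
        (Jp - Jm) x = 0 → x = 0) ∧
    (((LinearMap.ker (Jp - Jm) ⊔ LinearMap.ker (Jp + Jm))ᗮ).map (Jp + Jm) =
        (LinearMap.ker (Jp - Jm) ⊔ LinearMap.ker (Jp + Jm))ᗮ ∧
      ∀ x ∈ (LinearMap.ker (Jp - Jm) ⊔ LinearMap.ker (Jp + Jm))ᗮ,
        (Jp + Jm) x = 0 → x = 0) := by
  have p2 : ∀ x, Jp (Jp x) = -x := fun x => by simpa using LinearMap.congr_fun hp2 x
  have m2 : ∀ x, Jm (Jm x) = -x := fun x => by simpa using LinearMap.congr_fun hm2 x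
  have a1 : (LinearMap.ker (Jp - Jm)).map Jp ≤ LinearMap.ker (Jp - Jm) := by
    rintro _ ⟨x, hx, rfl⟩
    have hx : Jp x = Jm x := by simpa [sub_eq_zero] using hx
    rw [LinearMap.mem_ker, LinearMap.sub_apply, p2, hx, m2, sub_self]
  have a2 : (LinearMap.ker (Jp - Jm)).map Jm ≤ LinearMap.ker (Jp - Jm) := by
    rintro _ ⟨x, hx, rfl⟩
    have hx : Jp x = Jm x := by simpa [sub_eq_zero] using hx
    rw [LinearMap.mem_ker, LinearMap.sub_apply, m2, ← hx, p2, sub_self]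
  have b1 : (LinearMap.ker (Jp + Jm)).map Jp ≤ LinearMap.ker (Jp + Jm) := by
    rintro _ ⟨x, hx, rfl⟩
    have hx : Jp x = -Jm x := by simpa [add_eq_zero_iff_eq_neg] using hx
    rw [LinearMap.mem_ker, LinearMap.add_apply, p2, hx, map_neg, m2, neg_neg, neg_add_cancel]
  have b2 : (LinearMap.ker (Jp + Jm)).map Jm ≤ LinearMap.ker (Jp + Jm) := by
    rintro _ ⟨x, hx, rfl⟩
    have hx : Jm x = -Jp x := by simpa [add_eq_zero_iff_eq_neg'] using hx
    rw [LinearMap.mem_ker, LinearMap.add_apply, m2, hx, map_neg, p2, neg_neg, add_neg_cancel]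
  have c1 := aux_orth Jp p2 hpo (LinearMap.ker (Jp - Jm) ⊔ LinearMap.ker (Jp + Jm))
    (by rw [Submodule.map_sup]; exact sup_le_sup a1 b1)
  have c2 := aux_orth Jm m2 hmo (LinearMap.ker (Jp - Jm) ⊔ LinearMap.ker (Jp + Jm))
    (by rw [Submodule.map_sup]; exact sup_le_sup a2 b2)
  refine ⟨⟨a1, a2⟩, ⟨b1, b2⟩, ⟨c1, c2⟩, aux_aut _ _ le_sup_left ?_, aux_aut _ _ le_sup_right ?_⟩
  · intro x hx
    exact Submodule.sub_mem _ (c1 (Submodule.mem_map_of_mem hx)) (c2 (Submodule.mem_map_of_mem hx))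
  · intro x hx
    exact Submodule.add_mem _ (c1 (Submodule.mem_map_of_mem hx)) (c2 (Submodule.mem_map_of_mem hx))
end

section
/- Let V be a finite-dimensional real vector space, ε a nondegenerate alternating bilinear form on V with induced isomorphism ε̃ : V → V*, and J a complex structure on V such that ε(JX,X) > 0 for all nonzero X ∈ V; set J₊ = J and J₋ = −ε̃⁻¹ ∘ J^* ∘ ε̃, and let g be the positive definite symmetric bilinear form g(X,Y) = ½ ε((J₊+J₋)X, Y) with induced isomorphism g̃ : V → V*. Then, as linear maps from V* to V: ½ (J ∘ ε̃⁻¹ + ε̃⁻¹ ∘ J^*) = ½ (J₊ − J₋) ∘ ε̃⁻¹ = ¼ (J₊ ∘ J₋ − J₋ ∘ J₊) ∘ g̃⁻¹. -/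
open Module

theorem associated_bivector_formulas
    (V : Type*) [AddCommGroup V] [Module ℝ V] [FiniteDimensional ℝ V]
    (e : V ≃ₗ[ℝ] Module.Dual ℝ V) (halt : ∀ X : V, e X X = 0)
    (J : V →ₗ[ℝ] V) (hJ : J ∘ₗ J = -LinearMap.id)
    (hpos : ∀ X : V, X ≠ 0 → 0 < e (J X) X)
    (Jm : V →ₗ[ℝ] V)
    (hJm : Jm = -(e.symm.toLinearMap ∘ₗ J.dualMap ∘ₗ e.toLinearMap))
    (G : V ≃ₗ[ℝ] Module.Dual ℝ V)
    (hG : ∀ X Y : V, G X Y = (1 / 2 : ℝ) * e ((J + Jm) X) Y) :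
    (1 / 2 : ℝ) • (J ∘ₗ e.symm.toLinearMap + e.symm.toLinearMap ∘ₗ J.dualMap) =
      (1 / 2 : ℝ) • ((J - Jm) ∘ₗ e.symm.toLinearMap) ∧
    (1 / 2 : ℝ) • ((J - Jm) ∘ₗ e.symm.toLinearMap) =
      (1 / 4 : ℝ) • ((J ∘ₗ Jm - Jm ∘ₗ J) ∘ₗ G.symm.toLinearMap) := by
  have hJ2 : ∀ x, J (J x) = -x := fun x => by
    simpa using LinearMap.congr_fun hJ x
  have hm : ∀ x, Jm x = -e.symm (J.dualMap (e x)) := fun x => by simp [hJm]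
  have hD : ∀ f, J.dualMap (J.dualMap f) = -f := fun f => by
    ext x
    simp [LinearMap.dualMap_apply, hJ2]
  have hm2 : ∀ x, Jm (Jm x) = -x := fun x => by
    rw [hm (Jm x), hm x]
    simp only [map_neg, LinearEquiv.apply_symm_apply, hD, LinearEquiv.symm_apply_apply, neg_neg]
  have hGe : ∀ x, G x = (1 / 2 : ℝ) • e ((J + Jm) x) := fun x => by
    ext y
    simp [hG, mul_add]
  constructor
  · congr 1
    ext f
    simp only [LinearMap.add_apply, LinearMap.sub_apply, LinearMap.comp_apply,
      LinearEquiv.coe_coe, hm, LinearEquiv.apply_symm_apply, sub_neg_eq_add]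
  · apply LinearMap.ext
    intro f
    obtain ⟨x, rfl⟩ := G.surjective f
    simp only [LinearMap.smul_apply, LinearMap.comp_apply, LinearEquiv.coe_coe,
      LinearEquiv.symm_apply_apply]
    rw [hGe x]
    simp only [map_smul, LinearEquiv.symm_apply_apply, LinearMap.add_apply,
      LinearMap.sub_apply, map_add, hJ2, hm2, LinearMap.comp_apply]
    module
end
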